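/- arXiv:1509.05975 — 5 statements merged into one kernel-verified Lean document; each statement's English description precedes it below -/
import Mathlib

section
/- Let H₁ and H₂ be real Hilbert spaces, A, ΔA : H₁ → H₂ bounded linear operators, Ã = A + ΔA, B̃ = Ã*Ã, α > 0, R_α = α·id + B̃. Suppose y ∈ H₁, f, Δf ∈ H₂, Δy_α ∈ H₁ satisfy Ay = f and R_α(y + Δy_α) = Ã*(f + Δf). Then the absolute error of the regularized solution satisfies ‖Δy_α‖ ≤ ‖R_α⁻¹ Ã*‖ · (‖Δf‖ + ‖ΔA‖·‖y‖) + α ‖R_α⁻¹‖ · ‖y‖. -/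
open ContinuousLinearMap

/-- Absolute error bound for the Tikhonov-regularized solution:
`‖Δyα‖ ≤ ‖R_α⁻¹ Ã*‖ (‖Δf‖ + ‖ΔA‖‖y‖) + α ‖R_α⁻¹‖ ‖y‖`. -/
theorem tikhonov_absolute_error_bound
    {H₁ H₂ : Type*}
    [NormedAddCommGroup H₁] [InnerProductSpace ℝ H₁] [CompleteSpace H₁]
    [NormedAddCommGroup H₂] [InnerProductSpace ℝ H₂] [CompleteSpace H₂]
    (A ΔA Atilde : H₁ →L[ℝ] H₂) (hAt : Atilde = A + ΔA)
    (α : ℝ) (hα : 0 < α)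
    (Rα Rinv : H₁ →L[ℝ] H₁)
    (hR : Rα = α • ContinuousLinearMap.id ℝ H₁ +
        (ContinuousLinearMap.adjoint Atilde).comp Atilde)
    (hinv₁ : Rα.comp Rinv = ContinuousLinearMap.id ℝ H₁)
    (hinv₂ : Rinv.comp Rα = ContinuousLinearMap.id ℝ H₁)
    (y Δyα : H₁) (f Δf : H₂)
    (hyf : A y = f)
    (hreg : Rα (y + Δyα) = ContinuousLinearMap.adjoint Atilde (f + Δf)) :
    ‖Δyα‖ ≤ ‖Rinv.comp (ContinuousLinearMap.adjoint Atilde)‖ * (‖Δf‖ + ‖ΔA‖ * ‖y‖)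
      + α * ‖Rinv‖ * ‖y‖ := by
  have hAy : Atilde y = f + ΔA y := by rw [hAt, ← hyf]; rfl
  have hRy : Rα y = α • y + ContinuousLinearMap.adjoint Atilde (f + ΔA y) := by
    rw [← hAy, hR]; rfl
  have h1 : Rα Δyα = ContinuousLinearMap.adjoint Atilde (Δf - ΔA y) - α • y := by
    rw [map_add, hRy] at hreg
    rw [eq_sub_of_add_eq' hreg]
    simp only [map_add, map_sub]
    abel
  have h2 : Δyα = (Rinv.comp (ContinuousLinearMap.adjoint Atilde)) (Δf - ΔA y)
      - α • Rinv y := by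
    have h3 : Rinv (Rα Δyα) = Δyα := DFunLike.congr_fun hinv₂ Δyα
    rw [← h3, h1, map_sub, map_smul]; rfl
  have h4 : ‖Δf - ΔA y‖ ≤ ‖Δf‖ + ‖ΔA‖ * ‖y‖ :=
    (norm_sub_le _ _).trans (by gcongr; exact ΔA.le_opNorm y)
  have h5 : ‖α • Rinv y‖ ≤ α * ‖Rinv‖ * ‖y‖ := by
    rw [norm_smul, Real.norm_of_nonneg hα.le, mul_assoc]
    gcongr
    exact Rinv.le_opNorm y
  have h6 : ‖(Rinv.comp (ContinuousLinearMap.adjoint Atilde)) (Δf - ΔA y)‖ ≤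
      ‖Rinv.comp (ContinuousLinearMap.adjoint Atilde)‖ * (‖Δf‖ + ‖ΔA‖ * ‖y‖) :=
    (ContinuousLinearMap.le_opNorm _ _).trans (by gcongr)
  calc ‖Δyα‖ = ‖(Rinv.comp (ContinuousLinearMap.adjoint Atilde)) (Δf - ΔA y)
      - α • Rinv y‖ := congrArg norm h2
    _ ≤ _ := (norm_sub_le _ _).trans (add_le_add h6 h5)
end

section
/- Let H₁ and H₂ be real Hilbert spaces, A, ΔA : H₁ → H₂ bounded linear operators with A ≠ 0, Ã = A + ΔA, B̃ = Ã*Ã, α > 0, R_α = α·id + B̃. Suppose y ∈ H₁ with y ≠ 0, f, Δf ∈ H₂, Δy_α ∈ H₁ satisfy Ay = f with f ≠ 0 and R_α(y + Δy_α) = Ã*(f + Δf). Then, writing δ_rel = ‖Δf‖/‖f‖ and ξ_rel = ‖ΔA‖/‖A‖, the relative error of the regularized solution satisfies ‖Δy_α‖/‖y‖ ≤ ‖R_α⁻¹ Ã*‖ · ‖A‖ · (δ_rel + ξ_rel) + α ‖R_α⁻¹‖. -/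
open ContinuousLinearMap

/-- Relative error bound for the Tikhonov-regularized solution:
`‖Δyα‖/‖y‖ ≤ ‖R_α⁻¹ Ã*‖ ‖A‖ (δ_rel + ξ_rel) + α ‖R_α⁻¹‖`, where `δ_rel = ‖Δf‖/‖f‖`
and `ξ_rel = ‖ΔA‖/‖A‖`. -/
theorem tikhonov_relative_error_bound
    {H₁ H₂ : Type*}
    [NormedAddCommGroup H₁] [InnerProductSpace ℝ H₁] [CompleteSpace H₁]
    [NormedAddCommGroup H₂] [InnerProductSpace ℝ H₂] [CompleteSpace H₂]
    (A ΔA Atilde : H₁ →L[ℝ] H₂) (hA0 : A ≠ 0) (hAt : Atilde = A + ΔA)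
    (α : ℝ) (hα : 0 < α)
    (Rα Rinv : H₁ →L[ℝ] H₁)
    (hR : Rα = α • ContinuousLinearMap.id ℝ H₁ +
        (ContinuousLinearMap.adjoint Atilde).comp Atilde)
    (hinv₁ : Rα.comp Rinv = ContinuousLinearMap.id ℝ H₁)
    (hinv₂ : Rinv.comp Rα = ContinuousLinearMap.id ℝ H₁)
    (y Δyα : H₁) (f Δf : H₂)
    (hy0 : y ≠ 0) (hf0 : f ≠ 0)
    (hyf : A y = f)
    (hreg : Rα (y + Δyα) = ContinuousLinearMap.adjoint Atilde (f + Δf)) :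
    ‖Δyα‖ / ‖y‖ ≤
      ‖Rinv.comp (ContinuousLinearMap.adjoint Atilde)‖ * ‖A‖ * (‖Δf‖ / ‖f‖ + ‖ΔA‖ / ‖A‖)
      + α * ‖Rinv‖ := by
  have hy : 0 < ‖y‖ := norm_pos_iff.mpr hy0
  have hf : 0 < ‖f‖ := norm_pos_iff.mpr hf0
  have hA : 0 < ‖A‖ := norm_pos_iff.mpr hA0
  have hfy : ‖f‖ ≤ ‖A‖ * ‖y‖ := hyf ▸ A.le_opNorm y
  have hAty : Atilde y = f + ΔA y := by
    rw [hAt, ← hyf]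
    rfl
  have hRy : Rα y = α • y + ContinuousLinearMap.adjoint Atilde (f + ΔA y) := by
    rw [← hAty, hR]
    rfl
  have hRD : Rα Δyα = ContinuousLinearMap.adjoint Atilde (Δf - ΔA y) - α • y := by
    have h : Rα Δyα = Rα (y + Δyα) - Rα y := by
      rw [map_add]
      abel
    rw [h, hreg, hRy]
    simp only [map_add, map_sub]
    abel
  set T := Rinv.comp (ContinuousLinearMap.adjoint Atilde) with hT
  have hD : Δyα = T (Δf - ΔA y) - α • Rinv y := by
    have h : Rinv (Rα Δyα) = Δyα := DFunLike.congr_fun hinv₂ Δyα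
    rw [← h, hRD, map_sub, map_smul]
    rfl
  have h1 : ‖T (Δf - ΔA y)‖ ≤ ‖T‖ * (‖Δf‖ + ‖ΔA‖ * ‖y‖) := by
    refine (T.le_opNorm _).trans ?_
    gcongr
    exact (norm_sub_le _ _).trans (by gcongr; exact ΔA.le_opNorm y)
  have h2 : ‖α • Rinv y‖ ≤ α * (‖Rinv‖ * ‖y‖) := by
    rw [norm_smul, Real.norm_of_nonneg hα.le]
    gcongr
    exact Rinv.le_opNorm y
  have h3 : ‖Δyα‖ ≤ ‖T‖ * (‖Δf‖ + ‖ΔA‖ * ‖y‖) + α * (‖Rinv‖ * ‖y‖) := by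
    calc ‖Δyα‖ = ‖T (Δf - ΔA y) - α • Rinv y‖ := congrArg norm hD
      _ ≤ _ := (norm_sub_le _ _).trans (add_le_add h1 h2)
  have h4 : ‖Δf‖ ≤ ‖A‖ * ‖y‖ * (‖Δf‖ / ‖f‖) := by
    calc ‖Δf‖ = ‖f‖ * (‖Δf‖ / ‖f‖) := by field_simp
      _ ≤ _ := by gcongr
  have h5 : ‖ΔA‖ = ‖A‖ * (‖ΔA‖ / ‖A‖) := by field_simp
  rw [div_le_iff₀ hy]
  calc ‖Δyα‖ ≤ ‖T‖ * (‖Δf‖ + ‖ΔA‖ * ‖y‖) + α * (‖Rinv‖ * ‖y‖) := h3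
    _ ≤ ‖T‖ * (‖A‖ * ‖y‖ * (‖Δf‖ / ‖f‖) + ‖A‖ * (‖ΔA‖ / ‖A‖) * ‖y‖)
        + α * (‖Rinv‖ * ‖y‖) := by
      rw [← h5]
      gcongr
    _ = _ := by ring
end

section
/- Let A, ΔA : ℝⁿ → ℝᵐ be linear maps (m × n real matrices) with A ≠ 0, Ã = A + ΔA, B̃ = ÃᵀÃ, and α > 0. Suppose y ∈ ℝⁿ with y ≠ 0, f, Δf ∈ ℝᵐ, Δy_α ∈ ℝⁿ satisfy Ay = f with f ≠ 0 and (αI + B̃)(y + Δy_α) = Ãᵀ(f + Δf). Then, with δ_rel = ‖Δf‖/‖f‖, ξ_rel = ‖ΔA‖/‖A‖, η = δ_rel + ξ_rel, and μ_min the smallest eigenvalue of the symmetric positive-semidefinite matrix B̃, the relative error satisfies ‖Δy_α‖/‖y‖ ≤ (‖A‖/(2√α))·η + α/(α + μ_min). -/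
open ContinuousLinearMap

/-- Relative error bound (6) of the paper for Tikhonov regularization in Euclidean spaces:
`‖Δyα‖/‖y‖ ≤ (‖A‖/(2√α))·η + α/(α + μ_min)` with `η = ‖Δf‖/‖f‖ + ‖ΔA‖/‖A‖` and
`μ_min` the smallest eigenvalue of `B̃ = Ã*Ã`. -/
theorem tikhonov_relative_error_bound_euclidean
    {n m : ℕ}
    (A ΔA Atilde : EuclideanSpace ℝ (Fin n) →L[ℝ] EuclideanSpace ℝ (Fin m))
    (hA0 : A ≠ 0) (hAt : Atilde = A + ΔA)
    (Btilde : EuclideanSpace ℝ (Fin n) →L[ℝ] EuclideanSpace ℝ (Fin n))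
    (hB : Btilde = (ContinuousLinearMap.adjoint Atilde).comp Atilde)
    (α : ℝ) (hα : 0 < α)
    (μmin : ℝ)
    (hμ : μmin = sInf {μ : ℝ |
      Module.End.HasEigenvalue
        (Btilde : EuclideanSpace ℝ (Fin n) →ₗ[ℝ] EuclideanSpace ℝ (Fin n)) μ})
    (y Δyα : EuclideanSpace ℝ (Fin n)) (f Δf : EuclideanSpace ℝ (Fin m))
    (hy0 : y ≠ 0) (hf0 : f ≠ 0) (hyf : A y = f)
    (hreg : (α • ContinuousLinearMap.id ℝ (EuclideanSpace ℝ (Fin n)) + Btilde) (y + Δyα)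
        = ContinuousLinearMap.adjoint Atilde (f + Δf)) :
    ‖Δyα‖ / ‖y‖ ≤
      ‖A‖ / (2 * Real.sqrt α) * (‖Δf‖ / ‖f‖ + ‖ΔA‖ / ‖A‖) + α / (α + μmin) := by
  have hT : ∀ x, (α • ContinuousLinearMap.id ℝ (EuclideanSpace ℝ (Fin n)) + Btilde) x
      = α • x + Btilde x := fun x => by simp
  have hBin : ∀ x, inner ℝ (Btilde x) x = ‖Atilde x‖ ^ 2 := by
    intro x
    rw [hB, ContinuousLinearMap.comp_apply, ContinuousLinearMap.adjoint_inner_left,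
      real_inner_self_eq_norm_sq]
  have hTin : ∀ x, inner ℝ (α • x + Btilde x) x = α * ‖x‖ ^ 2 + ‖Atilde x‖ ^ 2 := by
    intro x
    rw [inner_add_left, real_inner_smul_left, hBin, real_inner_self_eq_norm_sq]
  have hsym : (Btilde : EuclideanSpace ℝ (Fin n) →ₗ[ℝ] EuclideanSpace ℝ (Fin n)).IsSymmetric := by
    intro x z
    simp only [ContinuousLinearMap.coe_coe]
    rw [hB, ContinuousLinearMap.comp_apply, ContinuousLinearMap.comp_apply,
      ContinuousLinearMap.adjoint_inner_left, ContinuousLinearMap.adjoint_inner_right]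
  have hev : ∀ μ : ℝ, Module.End.HasEigenvalue
      (Btilde : EuclideanSpace ℝ (Fin n) →ₗ[ℝ] EuclideanSpace ℝ (Fin n)) μ → 0 ≤ μ := by
    intro μ h
    obtain ⟨x, hx⟩ := h.exists_hasEigenvector
    have h1 : Btilde x = μ • x := hx.apply_eq_smul
    have h2 := hBin x
    rw [h1, real_inner_smul_left, real_inner_self_eq_norm_sq] at h2
    have h3 : 0 < ‖x‖ ^ 2 := by
      have := norm_pos_iff.mpr hx.2
      positivity
    by_contra! hneg
    nlinarith [sq_nonneg ‖Atilde x‖]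
  have hμ0 : 0 ≤ μmin := by
    rw [hμ]
    exact Real.sInf_nonneg hev
  have hray : ∀ x, μmin * ‖x‖ ^ 2 ≤ ‖Atilde x‖ ^ 2 := by
    intro x
    by_cases hx : x = 0
    · simp [hx]
    have : Nontrivial (EuclideanSpace ℝ (Fin n)) := ⟨⟨x, 0, hx⟩⟩
    have h1 := hsym.hasEigenvalue_iInf_of_finiteDimensional
    have h2 := csInf_le (s := {μ : ℝ | Module.End.HasEigenvalue
      (Btilde : EuclideanSpace ℝ (Fin n) →ₗ[ℝ] EuclideanSpace ℝ (Fin n)) μ}) ⟨0, hev⟩ h1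
    rw [← hμ] at h2
    have hxp : 0 < ‖x‖ ^ 2 := by
      have := norm_pos_iff.mpr hx
      positivity
    rw [← le_div_iff₀ hxp]
    refine h2.trans ?_
    have h3 := ciInf_le (f := fun x : { x : EuclideanSpace ℝ (Fin n) // x ≠ 0 } =>
      (RCLike.re (inner ℝ (Btilde x) (x : EuclideanSpace ℝ (Fin n))) : ℝ)
        / ‖(x : EuclideanSpace ℝ (Fin n))‖ ^ 2) ⟨0, by
          rintro _ ⟨z, rfl⟩
          simp only [hBin, RCLike.re_to_real]
          positivity⟩ ⟨x, hx⟩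
    simp only [hBin, RCLike.re_to_real] at h3
    refine le_trans (le_of_eq ?_) h3
    simp [hBin]
  have hinj : Function.Injective
      ((α • ContinuousLinearMap.id ℝ (EuclideanSpace ℝ (Fin n)) + Btilde :
        EuclideanSpace ℝ (Fin n) →L[ℝ] EuclideanSpace ℝ (Fin n)) :
        EuclideanSpace ℝ (Fin n) →ₗ[ℝ] EuclideanSpace ℝ (Fin n)) := by
    rw [injective_iff_map_eq_zero]
    intro x hx
    rw [ContinuousLinearMap.coe_coe, hT] at hx
    have h1 := hTin x
    rw [hx, inner_zero_left] at h1
    by_contra hne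
    have := norm_pos_iff.mpr hne
    have : 0 < α * ‖x‖ ^ 2 := by positivity
    nlinarith [sq_nonneg ‖Atilde x‖]
  obtain ⟨v, hv⟩ := (LinearMap.injective_iff_surjective.mp hinj) (-(α • y))
  rw [ContinuousLinearMap.coe_coe, hT] at hv
  have hu : α • (Δyα - v) + Btilde (Δyα - v)
      = ContinuousLinearMap.adjoint Atilde (Δf - ΔA y) := by
    rw [hT] at hreg
    have hBy : Btilde y = ContinuousLinearMap.adjoint Atilde (f + ΔA y) := by
      rw [hB, ContinuousLinearMap.comp_apply, ← hyf]
      congr 1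
      rw [hAt]; rfl
    simp only [map_add, map_sub, smul_add, smul_sub] at hreg hBy ⊢
    rw [hBy] at hreg
    rw [sub_add_sub_comm, hv, ← sub_eq_zero]
    rw [← sub_eq_zero] at hreg
    rw [← hreg]
    abel
  have hs : 0 < Real.sqrt α := Real.sqrt_pos.mpr hα
  have hss : Real.sqrt α ^ 2 = α := Real.sq_sqrt hα.le
  have hyp := norm_pos_iff.mpr hy0
  have hfp := norm_pos_iff.mpr hf0
  have hAp := norm_pos_iff.mpr hA0
  have hbu : 2 * Real.sqrt α * ‖Δyα - v‖ ≤ ‖Δf‖ + ‖ΔA‖ * ‖y‖ := by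
    have h1 := hTin (Δyα - v)
    rw [hu, ContinuousLinearMap.adjoint_inner_left] at h1
    have h2 := real_inner_le_norm (Δf - ΔA y) (Atilde (Δyα - v))
    have h3 : ‖Δf - ΔA y‖ ≤ ‖Δf‖ + ‖ΔA‖ * ‖y‖ :=
      (norm_sub_le _ _).trans (by gcongr; exact ΔA.le_opNorm y)
    refine le_trans ?_ h3
    refine (sq_le_sq₀ (by positivity) (norm_nonneg _)).mp ?_
    · rw [mul_pow, mul_pow, hss]
      nlinarith [sq_nonneg (‖Δf - ΔA y‖ - 2 * ‖Atilde (Δyα - v)‖)]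
  have hbv : (α + μmin) * ‖v‖ ≤ α * ‖y‖ := by
    have h1 := hTin v
    rw [hv] at h1
    have h2 := real_inner_le_norm (-(α • y)) v
    rw [norm_neg, norm_smul, Real.norm_of_nonneg hα.le] at h2
    have h3 := hray v
    by_cases h0 : ‖v‖ = 0
    · rw [h0]; simp; positivity
    have hvp : 0 < ‖v‖ := lt_of_le_of_ne (norm_nonneg _) (Ne.symm h0)
    refine le_of_mul_le_mul_right ?_ hvp
    nlinarith
  have htri : ‖Δyα‖ ≤ ‖Δyα - v‖ + ‖v‖ := by
    simpa using norm_add_le (Δyα - v) v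
  have hfA : ‖f‖ ≤ ‖A‖ * ‖y‖ := hyf ▸ A.le_opNorm y
  have e1 : ‖Δyα - v‖ / ‖y‖ ≤ ‖A‖ / (2 * Real.sqrt α) * (‖Δf‖ / ‖f‖ + ‖ΔA‖ / ‖A‖) := by
    have h1 : ‖Δf‖ ≤ ‖A‖ * ‖y‖ * (‖Δf‖ / ‖f‖) := by
      calc ‖Δf‖ = ‖f‖ * (‖Δf‖ / ‖f‖) := by field_simp
        _ ≤ _ := by gcongr
    have h2 : ‖A‖ / (2 * Real.sqrt α) * (‖Δf‖ / ‖f‖ + ‖ΔA‖ / ‖A‖)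
        = (‖A‖ * (‖Δf‖ / ‖f‖) + ‖ΔA‖) / (2 * Real.sqrt α) := by
      field_simp
    rw [h2, div_le_div_iff₀ hyp (by positivity)]
    nlinarith
  have e2 : ‖v‖ / ‖y‖ ≤ α / (α + μmin) := by
    rw [div_le_div_iff₀ hyp (by positivity)]
    linarith
  calc ‖Δyα‖ / ‖y‖ ≤ (‖Δyα - v‖ + ‖v‖) / ‖y‖ := by gcongr
    _ = ‖Δyα - v‖ / ‖y‖ + ‖v‖ / ‖y‖ := add_div _ _ _
    _ ≤ _ := add_le_add e1 e2
end

section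
/- Let c > 0, η > 0, g > 0 and ε(α) = cη/(2√α) + α/(α + g) for α > 0. If cη/√g < 3√3/4, then the derivative ε′ has exactly two zeros 0 < α₁ < α₂ in (0, ∞), with ε′ < 0 on (0, α₁), ε′ > 0 on (α₁, α₂) and ε′ < 0 on (α₂, ∞); in particular ε attains a strict local minimum at α₁ (and a strict local maximum at α₂), so ε has a unique local minimum point on (0, ∞). -/
open Set

/-- Factorisation of the quartic governing the sign of the derivative. -/
lemma quartic_factor (k g s₀ : ℝ) (hk : 0 < k) (hg : 0 < g) (hs₀ : 0 < s₀)
    (hpos : 0 < 4 * g * s₀ ^ 3 - k * (s₀ ^ 2 + g) ^ 2) :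
    ∃ s₁ s₂ b d : ℝ, 0 < s₁ ∧ s₁ < s₂ ∧ 0 < b ∧ 0 < d ∧
      ∀ s : ℝ, 4 * g * s ^ 3 - k * (s ^ 2 + g) ^ 2 =
        (s - s₁) * (s₂ - s) * (k * s ^ 2 + b * s + d) := by
  have hcont : Continuous (fun s : ℝ => 4 * g * s ^ 3 - k * (s ^ 2 + g) ^ 2) := by fun_prop
  obtain ⟨s₁, ⟨h1a, h1b⟩, h1⟩ := intermediate_value_Ioo hs₀.le hcont.continuousOn
    (show (0 : ℝ) ∈ Ioo _ _ from ⟨by have : 0 < k * g ^ 2 := by positivity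
                                     simp; nlinarith, hpos⟩)
  have hle : s₀ ≤ s₀ + 4 * g / k := by have : 0 < 4 * g / k := by positivity
                                       linarith
  have hneg : 4 * g * (s₀ + 4 * g / k) ^ 3 - k * ((s₀ + 4 * g / k) ^ 2 + g) ^ 2 < 0 := by
    set t := s₀ + 4 * g / k with ht
    have ht0 : 0 < t := by linarith
    have hkt : k * t = k * s₀ + 4 * g := by rw [ht]; field_simp
    have e : 4 * g * t ^ 3 - k * (t ^ 2 + g) ^ 2
        = -(k * s₀ * t ^ 3 + 2 * k * g * t ^ 2 + k * g ^ 2) := by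
      linear_combination (-t ^ 3) * hkt
    rw [e]
    have : 0 < k * s₀ * t ^ 3 + 2 * k * g * t ^ 2 + k * g ^ 2 := by positivity
    linarith
  obtain ⟨s₂, ⟨h2a, h2b⟩, h2⟩ := intermediate_value_Ioo' hle hcont.continuousOn
    (show (0 : ℝ) ∈ Ioo _ _ from ⟨hneg, hpos⟩)
  simp only at h1 h2
  have h2p : 0 < s₂ := by linarith
  obtain ⟨d, hd⟩ : ∃ d, d = k * g ^ 2 / (s₁ * s₂) := ⟨_, rfl⟩
  obtain ⟨b, hb⟩ : ∃ b, b = (s₁ + s₂) * d / (s₁ * s₂) := ⟨_, rfl⟩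
  have hd0 : 0 < d := by rw [hd]; positivity
  have hb0 : 0 < b := by rw [hb]; positivity
  have hd' : d * (s₁ * s₂) = k * g ^ 2 := by rw [hd]; field_simp
  have hb' : b * (s₁ * s₂) = (s₁ + s₂) * d := by rw [hb]; field_simp
  obtain ⟨A, hA⟩ : ∃ A, A = 4 * g + b - k * (s₁ + s₂) := ⟨_, rfl⟩
  obtain ⟨B, hB⟩ : ∃ B, B = -2 * k * g + d + k * (s₁ * s₂) - b * (s₁ + s₂) := ⟨_, rfl⟩
  have key : ∀ s, 4 * g * s ^ 3 - k * (s ^ 2 + g) ^ 2 =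
        (s - s₁) * (s₂ - s) * (k * s ^ 2 + b * s + d) + s ^ 2 * (A * s + B) := by
    intro s
    rw [hA, hB]
    linear_combination hd' + s * hb'
  have e1 : A * s₁ + B = 0 := by
    have := key s₁
    rw [h1] at this
    have h : s₁ ^ 2 * (A * s₁ + B) = 0 := by linarith
    exact (mul_eq_zero.mp h).resolve_left (by positivity)
  have e2 : A * s₂ + B = 0 := by
    have := key s₂
    rw [h2] at this
    have h : s₂ ^ 2 * (A * s₂ + B) = 0 := by linarith
    exact (mul_eq_zero.mp h).resolve_left (by positivity)
  have hA0 : A = 0 := by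
    have h : A * (s₂ - s₁) = 0 := by linarith
    exact (mul_eq_zero.mp h).resolve_right (by linarith)
  have hB0 : B = 0 := by rw [hA0] at e1; linarith
  refine ⟨s₁, s₂, b, d, h1a, by linarith, hb0, hd0, fun s => ?_⟩
  rw [key s, hA0, hB0]; ring

lemma envelope_hasDerivAt (k g α : ℝ) (hg : 0 < g) (hα : 0 < α) :
    HasDerivAt (fun a : ℝ => k / (2 * Real.sqrt a) + a / (a + g))
      ((4 * g * √α ^ 3 - k * (√α ^ 2 + g) ^ 2) / (4 * √α ^ 3 * (√α ^ 2 + g) ^ 2)) α := by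
  have hs : 0 < √α := Real.sqrt_pos.mpr hα
  have h1 := (hasDerivAt_const α k).div ((Real.hasDerivAt_sqrt hα.ne').const_mul 2)
    (by positivity)
  have h2 := (hasDerivAt_id α).div ((hasDerivAt_id α).add_const g)
    (by simp only [id]; positivity)
  have h := h1.add h2
  refine h.congr_deriv ?_
  have e : α = √α ^ 2 := (Real.sq_sqrt hα.le).symm
  simp only [id]
  generalize √α = s at *
  subst e
  field_simp
  ring

/-- Strict local minimum from the signs of the derivative. -/
lemma strict_min_of_deriv (f : ℝ → ℝ) (l m r : ℝ) (hlm : l < m) (hmr : m < r)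
    (hc : ContinuousOn f (Ioo l r)) (h1 : ∀ x ∈ Ioo l m, deriv f x < 0)
    (h2 : ∀ x ∈ Ioo m r, 0 < deriv f x) :
    ∀ x ∈ Ioo l r, x ≠ m → f m < f x := by
  have ha : StrictAntiOn f (Ioc l m) := by
    refine strictAntiOn_of_deriv_neg (convex_Ioc l m)
      (hc.mono fun x hx => ⟨hx.1, hx.2.trans_lt hmr⟩) ?_
    rw [interior_Ioc]; exact h1
  have hb : StrictMonoOn f (Ico m r) := by
    refine strictMonoOn_of_deriv_pos (convex_Ico m r)
      (hc.mono fun x hx => ⟨hlm.trans_le hx.1, hx.2⟩) ?_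
    rw [interior_Ico]; exact h2
  intro x hx hne
  rcases lt_or_gt_of_ne hne with h | h
  · exact ha ⟨hx.1, h.le⟩ ⟨hlm, le_rfl⟩ h
  · exact hb ⟨le_rfl, hmr⟩ ⟨h.le, hx.2⟩ h

lemma envelope_general (f : ℝ → ℝ) (a b : ℝ) (ha : 0 < a) (hab : a < b)
    (hd : ∀ x, 0 < x → DifferentiableAt ℝ f x)
    (h0 : ∀ x, 0 < x → (deriv f x = 0 ↔ x = a ∨ x = b))
    (h1 : ∀ x ∈ Ioo 0 a, deriv f x < 0)
    (h2 : ∀ x ∈ Ioo a b, 0 < deriv f x)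
    (h3 : ∀ x ∈ Ioi b, deriv f x < 0) :
    IsLocalMin f a ∧ (∀ᶠ x in nhdsWithin a {a}ᶜ, f a < f x) ∧
    IsLocalMax f b ∧ (∀ᶠ x in nhdsWithin b {b}ᶜ, f x < f b) ∧
    (∀ x, 0 < x → IsLocalMin f x → x = a) := by
  have hc : ContinuousOn f (Ioi 0) := fun x hx => (hd x hx).continuousAt.continuousWithinAt
  have m1 := strict_min_of_deriv f 0 a b ha hab (hc.mono fun x hx => hx.1) h1 h2
  have m2 := strict_min_of_deriv (fun x => -f x) a b (b + 1) hab (by linarith)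
    (hc.neg.mono fun x hx => ha.trans hx.1)
    (fun x hx => by rw [deriv.fun_neg]; linarith [h2 x hx])
    (fun x hx => by rw [deriv.fun_neg]; linarith [h3 x hx.1])
  have n1 : Ioo 0 b ∈ nhds a := Ioo_mem_nhds ha hab
  have n2 : Ioo a (b + 1) ∈ nhds b := Ioo_mem_nhds hab (by linarith)
  have smax : ∀ᶠ x in nhdsWithin b {b}ᶜ, f x < f b := by
    filter_upwards [nhdsWithin_le_nhds n2, self_mem_nhdsWithin] with x hx hne
    have := m2 x hx hne
    linarith
  refine ⟨?_, ?_, ?_, smax, ?_⟩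
  · filter_upwards [n1] with x hx
    by_cases h : x = a
    · rw [h]
    · exact (m1 x hx h).le
  · filter_upwards [nhdsWithin_le_nhds n1, self_mem_nhdsWithin] with x hx hne
    exact m1 x hx hne
  · filter_upwards [n2] with x hx
    by_cases h : x = b
    · rw [h]
    · have := m2 x hx h
      linarith
  · intro x hx hmin
    rcases (h0 x hx).mp hmin.deriv_eq_zero with h | h
    · exact h
    · subst h
      have hm : ∀ᶠ y in nhdsWithin x {x}ᶜ, f x ≤ f y := nhdsWithin_le_nhds hmin
      obtain ⟨y, hy1, hy2⟩ := (hm.and smax).exists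
      linarith

/-- Under condition (10) of the paper, `cη/√g < 3√3/4`, the derivative of the error envelope
`ε(α) = cη/(2√α) + α/(α + g)` has exactly two zeros `0 < α₁ < α₂`, with `ε′ < 0` on `(0, α₁)`,
`ε′ > 0` on `(α₁, α₂)`, `ε′ < 0` on `(α₂, ∞)`; hence `ε` has a strict local minimum at `α₁`,
a strict local maximum at `α₂`, and `α₁` is the unique local minimum point on `(0, ∞)`. -/
theorem error_envelope_unique_minimum
    (c η g : ℝ) (hc : 0 < c) (hη : 0 < η) (hg : 0 < g)
    (hcond : c * η / Real.sqrt g < 3 * Real.sqrt 3 / 4) :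
    ∃ α₁ α₂ : ℝ, 0 < α₁ ∧ α₁ < α₂ ∧
      (∀ α : ℝ, 0 < α →
        (deriv (fun a : ℝ => c * η / (2 * Real.sqrt a) + a / (a + g)) α = 0 ↔
          α = α₁ ∨ α = α₂)) ∧
      (∀ α ∈ Ioo (0 : ℝ) α₁,
        deriv (fun a : ℝ => c * η / (2 * Real.sqrt a) + a / (a + g)) α < 0) ∧
      (∀ α ∈ Ioo α₁ α₂,
        0 < deriv (fun a : ℝ => c * η / (2 * Real.sqrt a) + a / (a + g)) α) ∧
      (∀ α ∈ Ioi α₂,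
        deriv (fun a : ℝ => c * η / (2 * Real.sqrt a) + a / (a + g)) α < 0) ∧
      IsLocalMin (fun a : ℝ => c * η / (2 * Real.sqrt a) + a / (a + g)) α₁ ∧
      (∀ᶠ x in nhdsWithin α₁ {α₁}ᶜ,
        (fun a : ℝ => c * η / (2 * Real.sqrt a) + a / (a + g)) α₁ <
          (fun a : ℝ => c * η / (2 * Real.sqrt a) + a / (a + g)) x) ∧
      IsLocalMax (fun a : ℝ => c * η / (2 * Real.sqrt a) + a / (a + g)) α₂ ∧
      (∀ᶠ x in nhdsWithin α₂ {α₂}ᶜ,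
        (fun a : ℝ => c * η / (2 * Real.sqrt a) + a / (a + g)) x <
          (fun a : ℝ => c * η / (2 * Real.sqrt a) + a / (a + g)) α₂) ∧
      (∀ α : ℝ, 0 < α →
        IsLocalMin (fun a : ℝ => c * η / (2 * Real.sqrt a) + a / (a + g)) α → α = α₁) := by
  have hk : 0 < c * η := mul_pos hc hη
  obtain ⟨s₁, s₂, b, d, hs1, hs12, hb, hd, hP⟩ := quartic_factor (c * η) g (√3 * √g) hk hg
    (by positivity) (by
      have hsg : 0 < √g := Real.sqrt_pos.mpr hg
      rw [div_lt_iff₀ hsg] at hcond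
      have e3 : √3 ^ 2 = (3 : ℝ) := Real.sq_sqrt (by norm_num)
      have eg : √g ^ 2 = g := Real.sq_sqrt hg.le
      have e : 4 * g * (√3 * √g) ^ 3 - c * η * ((√3 * √g) ^ 2 + g) ^ 2
          = 16 * g ^ 2 * (3 * √3 / 4 * √g - c * η) := by
        have a1 : (√3 * √g) ^ 2 = 3 * g := by rw [mul_pow, e3, eg]
        have a2 : (√3 * √g) ^ 3 = 3 * g * (√3 * √g) := by rw [pow_succ, a1]
        rw [a1, a2]; ring
      rw [e]
      have : 0 < 3 * √3 / 4 * √g - c * η := by linarith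
      positivity)
  have hs2 : 0 < s₂ := hs1.trans hs12
  have hD : ∀ α : ℝ, 0 < α → ∃ Q : ℝ, 0 < Q ∧
      deriv (fun a : ℝ => c * η / (2 * Real.sqrt a) + a / (a + g)) α
        = (√α - s₁) * (s₂ - √α) * Q := by
    intro α hα
    have hs : 0 < √α := Real.sqrt_pos.mpr hα
    refine ⟨(c * η * √α ^ 2 + b * √α + d) / (4 * √α ^ 3 * (√α ^ 2 + g) ^ 2), by positivity, ?_⟩
    rw [(envelope_hasDerivAt (c * η) g α hg hα).deriv, hP]
    ring
  have hdiff : ∀ α : ℝ, 0 < α →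
      DifferentiableAt ℝ (fun a : ℝ => c * η / (2 * Real.sqrt a) + a / (a + g)) α :=
    fun α hα => (envelope_hasDerivAt (c * η) g α hg hα).differentiableAt
  have h12 : s₁ ^ 2 < s₂ ^ 2 := by gcongr
  have hz : ∀ α : ℝ, 0 < α →
        (deriv (fun a : ℝ => c * η / (2 * Real.sqrt a) + a / (a + g)) α = 0 ↔
          α = s₁ ^ 2 ∨ α = s₂ ^ 2) := by
    intro α hα
    obtain ⟨Q, hQ, e⟩ := hD α hα
    rw [e, mul_eq_zero, mul_eq_zero, sub_eq_zero, sub_eq_zero, or_iff_left hQ.ne',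
      Real.sqrt_eq_iff_eq_sq hα.le hs1.le, eq_comm (a := s₂),
      Real.sqrt_eq_iff_eq_sq hα.le hs2.le]
  have hn1 : ∀ α ∈ Ioo (0 : ℝ) (s₁ ^ 2),
        deriv (fun a : ℝ => c * η / (2 * Real.sqrt a) + a / (a + g)) α < 0 := by
    intro α hα
    obtain ⟨Q, hQ, e⟩ := hD α hα.1
    have hlt : √α < s₁ := (Real.sqrt_lt' hs1).mpr hα.2
    rw [e]
    exact mul_neg_of_neg_of_pos (mul_neg_of_neg_of_pos (by linarith) (by linarith)) hQ
  have hp : ∀ α ∈ Ioo (s₁ ^ 2) (s₂ ^ 2),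
        0 < deriv (fun a : ℝ => c * η / (2 * Real.sqrt a) + a / (a + g)) α := by
    intro α hα
    obtain ⟨Q, hQ, e⟩ := hD α ((by positivity : (0 : ℝ) < s₁ ^ 2).trans hα.1)
    have hlt : √α < s₂ := (Real.sqrt_lt' hs2).mpr hα.2
    have hgt : s₁ < √α := (Real.lt_sqrt hs1.le).mpr hα.1
    rw [e]
    exact mul_pos (mul_pos (by linarith) (by linarith)) hQ
  have hn2 : ∀ α ∈ Ioi (s₂ ^ 2),
        deriv (fun a : ℝ => c * η / (2 * Real.sqrt a) + a / (a + g)) α < 0 := by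
    intro α hα
    obtain ⟨Q, hQ, e⟩ := hD α ((by positivity : (0 : ℝ) < s₂ ^ 2).trans hα)
    have hgt : s₂ < √α := (Real.lt_sqrt hs2.le).mpr hα
    rw [e]
    exact mul_neg_of_neg_of_pos (mul_neg_of_pos_of_neg (by linarith) (by linarith)) hQ
  exact ⟨s₁ ^ 2, s₂ ^ 2, by positivity, h12, hz, hn1, hp, hn2,
    envelope_general _ _ _ (by positivity) h12 hdiff hz hn1 hp hn2⟩
end

section
/- Let c > 0, η > 0, g > 0 and ε(α) = cη/(2√α) + α/(α + g) for α > 0. If cη/√g > 3√3/4, then ε′(α) < 0 for every α > 0; i.e., ε is strictly decreasing on (0, ∞) and has no interior minimum point. -/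
open Set

/-- In the complementary case to condition (10), `cη/√g > 3√3/4`, the error envelope
`ε(α) = cη/(2√α) + α/(α + g)` has `ε′(α) < 0` for all `α > 0`: it is strictly decreasing
on `(0, ∞)` and has no interior (local) minimum point there. -/
theorem error_envelope_no_minimum
    (c η g : ℝ) (hc : 0 < c) (hη : 0 < η) (hg : 0 < g)
    (hcond : 3 * Real.sqrt 3 / 4 < c * η / Real.sqrt g) :
    (∀ α : ℝ, 0 < α →
      deriv (fun a : ℝ => c * η / (2 * Real.sqrt a) + a / (a + g)) α < 0) ∧
    StrictAntiOn (fun a : ℝ => c * η / (2 * Real.sqrt a) + a / (a + g)) (Ioi 0) ∧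
    (∀ α : ℝ, 0 < α →
      ¬ IsLocalMinOn (fun a : ℝ => c * η / (2 * Real.sqrt a) + a / (a + g)) (Ioi 0) α) := by
  have key : ∀ α : ℝ, 0 < α → ∃ d : ℝ, d < 0 ∧
      HasDerivAt (fun a : ℝ => c * η / (2 * Real.sqrt a) + a / (a + g)) d α := by
    intro α hα
    have hs : 0 < Real.sqrt α := Real.sqrt_pos.2 hα
    have hr : 0 < Real.sqrt g := Real.sqrt_pos.2 hg
    have ht : 0 < Real.sqrt 3 := Real.sqrt_pos.2 (by norm_num)
    have hag : α + g ≠ 0 := by positivity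
    have h1 := ((Real.hasDerivAt_sqrt hα.ne').const_mul 2)
    have h2 := (hasDerivAt_const α (c * η)).fun_div h1 (by positivity)
    have h3 := (hasDerivAt_id' α).fun_div ((hasDerivAt_id' α).add_const g) hag
    refine ⟨_, ?_, h2.fun_add h3⟩
    have es : Real.sqrt α ^ 2 = α := Real.sq_sqrt hα.le
    have er : Real.sqrt g ^ 2 = g := Real.sq_sqrt hg.le
    have et : Real.sqrt 3 ^ 2 = 3 := Real.sq_sqrt (by norm_num)
    rw [lt_div_iff₀ hr] at hcond
    generalize Real.sqrt α = s at *
    generalize Real.sqrt g = r at *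
    generalize Real.sqrt 3 = t at *
    obtain ⟨u, rfl⟩ : ∃ u, s = t * u := ⟨s / t, by field_simp⟩
    have hu : 0 < u := pos_of_mul_pos_right hs ht.le
    have e1 : α = 3 * u ^ 2 := by rw [← es, mul_pow, et]
    have hA : 0 < α + g := by positivity
    have p1 : 16 * r * u ^ 3 ≤ (α + g) ^ 2 := by
      have : 0 ≤ (u - r) ^ 2 * (9 * u ^ 2 + 2 * u * r + r ^ 2) := by positivity
      rw [e1, ← er]
      nlinarith
    have p2 : 4 * g * (t * u) ^ 3 < c * η * (α + g) ^ 2 := by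
      calc 4 * g * (t * u) ^ 3 = (3 * t / 4 * r) * (16 * r * u ^ 3) := by
            rw [← er]
            linear_combination (4 * r ^ 2 * u ^ 3 * t) * et
        _ ≤ (3 * t / 4 * r) * (α + g) ^ 2 := by gcongr
        _ < _ := by gcongr
    have e2 : (0 * (2 * (t * u)) - c * η * (2 * (1 / (2 * (t * u))))) / (2 * (t * u)) ^ 2 +
        (1 * (α + g) - α * 1) / (α + g) ^ 2 =
        (4 * g * (t * u) ^ 3 - c * η * (α + g) ^ 2) / (4 * (t * u) ^ 3 * (α + g) ^ 2) := by
      field_simp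
      ring
    rw [e2]
    exact div_neg_of_neg_of_pos (by linarith) (by positivity)
  have hd : ∀ α : ℝ, 0 < α →
      deriv (fun a : ℝ => c * η / (2 * Real.sqrt a) + a / (a + g)) α < 0 := by
    intro α hα
    obtain ⟨d, hd, h⟩ := key α hα
    rwa [h.deriv]
  refine ⟨hd, ?_, ?_⟩
  · apply strictAntiOn_of_deriv_neg (convex_Ioi 0)
    · intro x hx
      obtain ⟨d, _, h⟩ := key x hx
      exact h.continuousAt.continuousWithinAt
    · intro x hx
      rw [interior_Ioi] at hx
      exact hd x hx
  · intro α hα hmin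
    have := (hmin.isLocalMin (Ioi_mem_nhds hα)).deriv_eq_zero
    exact (hd α hα).ne this
end
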